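/- Gauss's summation theorem: if Re(c − a − b) > 0 and c is not a nonpositive integer, then the hypergeometric series ∑_{k=0}^∞ (a)_k (b)_k / (k! (c)_k) converges and equals Γ(c)Γ(c−a−b) / (Γ(c−a)Γ(c−b)). -/

import Mathlib

open Filter Topology

namespace GaussAux

/-- The Pochhammer symbol. -/
noncomputable def P (k : ℕ) (s : ℂ) : ℂ := (ascPochhammer ℂ k).eval s

/-- The hypergeometric term. -/
noncomputable def t (a b c : ℂ) (k : ℕ) : ℂ := P k a * P k b / ((Nat.factorial k : ℂ) * P k c)

lemma P_zero (s : ℂ) : P 0 s = 1 := by simp [P]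

lemma P_succ (k : ℕ) (s : ℂ) : P (k + 1) s = P k s * (s + k) := by
  simp [P, ascPochhammer_succ_eval]

lemma P_prod (k : ℕ) (s : ℂ) : P k s = ∏ j ∈ Finset.range k, (s + j) := by
  induction k with
  | zero => simp [P_zero]
  | succ k ih => rw [P_succ, ih, Finset.prod_range_succ]

lemma P_succ' (k : ℕ) (s : ℂ) : P (k + 1) s = s * P k (s + 1) := by
  rw [P_prod, P_prod, Finset.prod_range_succ']
  push_cast
  rw [mul_comm]
  simp [add_assoc, add_comm, add_left_comm]

lemma P_ne {s : ℂ} (hs : ∀ n : ℕ, s ≠ -(n : ℂ)) (k : ℕ) : P k s ≠ 0 := by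
  rw [P_prod, Finset.prod_ne_zero_iff]
  intro j _ h
  exact hs j (eq_neg_of_add_eq_zero_left h)

lemma inv_seq (s : ℂ) (n : ℕ) :
    (Complex.GammaSeq s n)⁻¹ = P (n + 1) s / ((n : ℂ) ^ s * (n.factorial : ℂ)) := by
  rw [Complex.GammaSeq, inv_div, P_prod]

lemma inv_seq_tendsto (s : ℂ) :
    Tendsto (fun n => (Complex.GammaSeq s n)⁻¹) atTop (𝓝 (Complex.Gamma s)⁻¹) := by
  by_cases h : Complex.Gamma s = 0
  · obtain ⟨m, hm⟩ := (Complex.Gamma_eq_zero_iff s).1 h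
    rw [h, inv_zero]
    apply tendsto_const_nhds.congr'
    filter_upwards [eventually_ge_atTop m] with n hn
    rw [inv_seq, P_prod, Finset.prod_eq_zero (i := m) (by simp; omega) (by simp [hm]), zero_div]
  · exact (Complex.GammaSeq_tendsto_Gamma s).inv₀ h

lemma t_eq (a b c : ℂ) (n : ℕ) (hn : n ≠ 0) :
    t a b c (n + 1) = (Complex.GammaSeq a n)⁻¹ * (Complex.GammaSeq b n)⁻¹ * Complex.GammaSeq c n
      * (n : ℂ) ^ (a + b - c) / ((n : ℂ) + 1) := by
  have hn' : (n : ℂ) ≠ 0 := by exact_mod_cast hn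
  rw [← inv_inv (Complex.GammaSeq c n), inv_seq, inv_seq, inv_seq, t, Nat.factorial_succ,
    Complex.cpow_sub _ _ hn', Complex.cpow_add _ _ hn']
  have h1 : (n : ℂ) ^ a ≠ 0 := by simp [Complex.cpow_eq_zero_iff, hn]
  have h2 : (n : ℂ) ^ b ≠ 0 := by simp [Complex.cpow_eq_zero_iff, hn]
  have h3 : (n : ℂ) ^ c ≠ 0 := by simp [Complex.cpow_eq_zero_iff, hn]
  have h4 : (n.factorial : ℂ) ≠ 0 := by exact_mod_cast n.factorial_ne_zero
  have h5 : (n : ℂ) + 1 ≠ 0 := by exact_mod_cast n.succ_ne_zero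
  by_cases h6 : P (n + 1) c = 0
  · simp [h6]
  push_cast
  field_simp

lemma u_tendsto (a b c : ℂ) :
    Tendsto (fun n => (Complex.GammaSeq a n)⁻¹ * (Complex.GammaSeq b n)⁻¹ * Complex.GammaSeq c n)
      atTop (𝓝 ((Complex.Gamma a)⁻¹ * (Complex.Gamma b)⁻¹ * Complex.Gamma c)) :=
  ((inv_seq_tendsto a).mul (inv_seq_tendsto b)).mul (Complex.GammaSeq_tendsto_Gamma c)

lemma kt_tendsto (a b c : ℂ) (hre : 0 < (c - a - b).re) :
    Tendsto (fun k : ℕ => (k : ℂ) * t a b c k) atTop (𝓝 0) := by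
  rw [← tendsto_add_atTop_iff_nat 1]
  have h1 : Tendsto (fun n : ℕ => (n : ℂ) ^ (a + b - c)) atTop (𝓝 0) := by
    rw [tendsto_zero_iff_norm_tendsto_zero]
    have := (tendsto_rpow_neg_atTop hre).comp (tendsto_natCast_atTop_atTop (R := ℝ))
    apply this.congr'
    filter_upwards [eventually_gt_atTop 0] with n hn
    rw [Complex.norm_natCast_cpow_of_pos hn]
    simp only [Function.comp]
    congr 1
    simp; ring
  have h2 := (u_tendsto a b c).mul h1
  rw [mul_zero] at h2
  apply h2.congr'
  filter_upwards [eventually_gt_atTop 0] with n hn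
  rw [t_eq a b c n hn.ne']
  have h5 : (n : ℂ) + 1 ≠ 0 := by exact_mod_cast n.succ_ne_zero
  push_cast
  field_simp

lemma t_summable (a b c : ℂ) (hre : 0 < (c - a - b).re) :
    Summable (fun k => ‖t a b c k‖) := by
  rw [← summable_nat_add_iff 1]
  have hs : Summable (fun n : ℕ => (n : ℝ) ^ (-(c - a - b).re - 1)) := by
    rw [Real.summable_nat_rpow]; linarith
  refine summable_of_isBigO_nat hs ?_
  have hb := (u_tendsto a b c).norm.isBigO_one ℝ
  have h2 := hb.mul (Asymptotics.isBigO_refl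
    (fun n : ℕ => (n : ℝ) ^ (-(c - a - b).re - 1)) atTop)
  simp only [one_mul] at h2
  refine Asymptotics.IsBigO.trans (Asymptotics.IsBigO.of_bound 1 ?_) h2
  filter_upwards [eventually_gt_atTop 0] with n hn
  have hn0 : (0 : ℝ) < n := by exact_mod_cast hn
  rw [t_eq a b c n hn.ne', one_mul, norm_div, norm_mul _ ((n : ℂ) ^ _),
    Complex.norm_natCast_cpow_of_pos hn, Real.rpow_sub_one hn0.ne', ← mul_div_assoc]
  have e : (a + b - c).re = -(c - a - b).re := by simp; ring
  have e2 : ‖(n : ℂ) + 1‖ = (n : ℝ) + 1 := by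
    have : ((n : ℂ) + 1) = ((n + 1 : ℕ) : ℂ) := by push_cast; rfl
    rw [this, Complex.norm_natCast]; push_cast; rfl
  rw [e, e2]
  refine le_trans (le_of_eq (Real.norm_of_nonneg (by positivity))) (le_trans ?_ (Real.le_norm_self _))
  gcongr
  linarith

lemma contig (a b c : ℂ) (hc : ∀ n : ℕ, c ≠ -(n : ℂ)) (k : ℕ) :
    c * (c - a - b) * t a b c k - (c - a) * (c - b) * t a b (c + 1) k
      = -c * (((k + 1 : ℕ) : ℂ) * t a b c (k + 1)) - -c * ((k : ℂ) * t a b c k) := by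
  have hc0 : c ≠ 0 := by simpa using hc 0
  have hck : c + k ≠ 0 := fun h => hc k (eq_neg_of_add_eq_zero_left h)
  have hP := P_ne hc k
  have h4 : (k.factorial : ℂ) ≠ 0 := by exact_mod_cast k.factorial_ne_zero
  have h5 : (k : ℂ) + 1 ≠ 0 := by exact_mod_cast k.succ_ne_zero
  have hB : P k (c + 1) = P k c * (c + k) / c := by
    rw [eq_div_iff hc0, ← P_succ, P_succ', mul_comm]
  simp only [t, hB, P_succ, Nat.factorial_succ]
  push_cast
  field_simp
  ring

lemma step (a b c : ℂ) (hc : ∀ n : ℕ, c ≠ -(n : ℂ)) (hre : 0 < (c - a - b).re) :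
    c * (c - a - b) * ∑' k, t a b c k = (c - a) * (c - b) * ∑' k, t a b (c + 1) k := by
  have s1 := (t_summable a b c hre).of_norm.hasSum.mul_left (c * (c - a - b))
  have s2 := (t_summable a b (c + 1) (by simp at *; linarith)).of_norm.hasSum.mul_left
    ((c - a) * (c - b))
  have h := (s1.sub s2).tendsto_sum_nat
  have h0 := (kt_tendsto a b c hre).const_mul (-c)
  rw [mul_zero] at h0
  have : ∀ n : ℕ, ∑ k ∈ Finset.range n,
      (c * (c - a - b) * t a b c k - (c - a) * (c - b) * t a b (c + 1) k)
      = -c * ((n : ℂ) * t a b c n) := by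
    intro n
    rw [Finset.sum_congr rfl (fun k _ => contig a b c hc k),
      Finset.sum_range_sub (fun k : ℕ => -c * ((k : ℂ) * t a b c k))]
    simp
  simp only [this] at h
  exact sub_eq_zero.1 (tendsto_nhds_unique h h0)

lemma shift_ne {c : ℂ} (hc : ∀ n : ℕ, c ≠ -(n : ℂ)) (m : ℕ) : ∀ n : ℕ, c + m ≠ -(n : ℂ) := by
  intro n h
  apply hc (n + m)
  push_cast
  linear_combination h

lemma iter (a b c : ℂ) (hc : ∀ n : ℕ, c ≠ -(n : ℂ)) (hre : 0 < (c - a - b).re) (n : ℕ) :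
    P n c * P n (c - a - b) * ∑' k, t a b c k
      = P n (c - a) * P n (c - b) * ∑' k, t a b (c + n) k := by
  induction n with
  | zero => simp [P_zero]
  | succ n ih =>
    have := step a b (c + n) (shift_ne hc n) (by simp at *; linarith [Nat.cast_nonneg (α := ℝ) n])
    simp only [P_succ]
    push_cast
    rw [← add_assoc]
    linear_combination (c + n) * (c - a - b + n) * ih + P n (c - a) * P n (c - b) * this

lemma P_norm_le (x : ℝ) (hx : 0 < x) (z : ℂ) (hz : x ≤ z.re) (k : ℕ) :
    ‖P k (x : ℂ)‖ ≤ ‖P k z‖ := by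
  rw [P_prod, P_prod, norm_prod, norm_prod]
  apply Finset.prod_le_prod
  · intros; positivity
  · intro j _
    have : ‖(x : ℂ) + j‖ = x + j := by
      rw [show (x : ℂ) + j = ((x + j : ℝ) : ℂ) by push_cast; rfl, Complex.norm_real,
        Real.norm_of_nonneg (by positivity)]
    rw [this]
    refine le_trans ?_ (Complex.re_le_norm _)
    simp [hz]

lemma pos_ne (x : ℝ) (hx : 0 < x) : ∀ n : ℕ, (x : ℂ) ≠ -(n : ℂ) := by
  intro n h
  have := congrArg Complex.re h
  simp at this
  linarith [Nat.cast_nonneg (α := ℝ) n]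

lemma lim_one (a b c : ℂ) (hre : 0 < (c - a - b).re) :
    Tendsto (fun n : ℕ => ∑' k, t a b (c + n) k) atTop (𝓝 1) := by
  obtain ⟨N, hN⟩ := exists_nat_gt (max (-c.re) 0)
  have hN1 : 0 < c.re + N := by linarith [le_max_left (-c.re) 0]
  have hsum := t_summable a b ((c.re + N : ℝ) : ℂ) (by
    simp at *; linarith [Nat.cast_nonneg (α := ℝ) N])
  have key := tendsto_tsum_of_dominated_convergence (𝓕 := (atTop : Filter ℕ))
    (f := fun n k => t a b (c + n) k) (g := fun k => if k = 0 then 1 else 0) hsum ?_ ?_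
  · simpa using key
  · intro k
    rcases k with _ | k
    · simp [t, P_zero]
    · simp only [Nat.add_eq_zero_iff, one_ne_zero, and_false, if_false]
      have hinf : ∀ j : ℕ, Tendsto (fun n : ℕ => (c + n + j)⁻¹) atTop (𝓝 0) := by
        intro j
        apply tendsto_inv₀_cobounded.comp
        rw [← tendsto_norm_atTop_iff_cobounded]
        refine tendsto_atTop_mono (f := fun n : ℕ => (c.re + j) + (n : ℝ)) (fun n => ?_)
          (tendsto_atTop_add_const_left _ _ tendsto_natCast_atTop_atTop)
        refine le_trans (le_of_eq ?_) (Complex.re_le_norm _)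
        simp; ring
      have hP : Tendsto (fun n : ℕ => (P (k + 1) (c + n))⁻¹) atTop (𝓝 0) := by
        simp only [P_prod, ← Finset.prod_inv_distrib]
        have := tendsto_finsetProd (Finset.range (k + 1)) (fun j _ => hinf j)
        simpa using this
      have := hP.const_mul (P (k + 1) a * P (k + 1) b / ((k + 1).factorial : ℂ))
      rw [mul_zero] at this
      refine this.congr (fun n => ?_)
      rw [t, ← div_div, div_eq_mul_inv _ (P (k + 1) (c + n))]
  · filter_upwards [eventually_ge_atTop N] with n hn k
    have hnN : (N : ℝ) ≤ n := by exact_mod_cast hn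
    have h1 := P_norm_le (c.re + N) hN1 (c + n) (by simp; exact hn) k
    have h2 := P_ne (pos_ne (c.re + N) hN1) k
    have h3 : 0 < ‖P k ((c.re + N : ℝ) : ℂ)‖ := norm_pos_iff.2 h2
    have h4 : 0 < (k.factorial : ℝ) := by exact_mod_cast k.factorial_pos
    simp only [t, norm_div, norm_mul, Complex.norm_natCast]
    gcongr

lemma ratio_tendsto (a b c : ℂ) (hre : 0 < (c - a - b).re) :
    Tendsto (fun n : ℕ => P (n + 1) (c - a) * P (n + 1) (c - b) /
      (P (n + 1) c * P (n + 1) (c - a - b))) atTop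
      (𝓝 (Complex.Gamma c * Complex.Gamma (c - a - b) /
        (Complex.Gamma (c - a) * Complex.Gamma (c - b)))) := by
  have h := (u_tendsto (c - a) (c - b) c).mul (Complex.GammaSeq_tendsto_Gamma (c - a - b))
  convert h.congr' ?_ using 2
  · rw [div_eq_mul_inv, mul_inv]; ring
  filter_upwards [eventually_gt_atTop 0] with n hn
  have hn' : (n : ℂ) ≠ 0 := by exact_mod_cast hn.ne'
  rw [← inv_inv (Complex.GammaSeq c n), ← inv_inv (Complex.GammaSeq (c - a - b) n)]
  simp only [inv_seq]
  have h1 : (n : ℂ) ^ (c - a) ≠ 0 := by simp [Complex.cpow_eq_zero_iff, hn']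
  have h2 : (n : ℂ) ^ (c - b) ≠ 0 := by simp [Complex.cpow_eq_zero_iff, hn']
  have h3 : (n : ℂ) ^ c ≠ 0 := by simp [Complex.cpow_eq_zero_iff, hn']
  have h6 : (n : ℂ) ^ (c - a - b) ≠ 0 := by simp [Complex.cpow_eq_zero_iff, hn']
  have h7 : (n : ℂ) ^ c * (n : ℂ) ^ (c - a - b) = (n : ℂ) ^ (c - a) * (n : ℂ) ^ (c - b) := by
    rw [← Complex.cpow_add _ _ hn', ← Complex.cpow_add _ _ hn']; congr 1; ring
  have h4 : (n.factorial : ℂ) ≠ 0 := by exact_mod_cast n.factorial_ne_zero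
  by_cases h8 : P (n + 1) c = 0
  · simp [h8]
  by_cases h9 : P (n + 1) (c - a - b) = 0
  · simp [h9]
  field_simp
  linear_combination P (n + 1) (c - a) * P (n + 1) (c - b) * h7

end GaussAux


/-- Gauss's summation theorem: if Re(c - a - b) > 0 and c is not a nonpositive integer,
then ∑_{k=0}^∞ (a)_k (b)_k / (k! (c)_k) = Γ(c)Γ(c-a-b)/(Γ(c-a)Γ(c-b)). -/
theorem gauss_summation (a b c : ℂ)
    (hc : ∀ n : ℕ, c ≠ -(n : ℂ))
    (hre : 0 < (c - a - b).re) :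
    HasSum
      (fun k : ℕ =>
        (ascPochhammer ℂ k).eval a * (ascPochhammer ℂ k).eval b /
          ((Nat.factorial k : ℂ) * (ascPochhammer ℂ k).eval c))
      (Complex.Gamma c * Complex.Gamma (c - a - b) /
        (Complex.Gamma (c - a) * Complex.Gamma (c - b))) := by
  have hs := (GaussAux.t_summable a b c hre).of_norm.hasSum
  have hd : ∀ n : ℕ, c - a - b ≠ -(n : ℂ) := by
    intro n h
    rw [h] at hre
    simp at hre
    linarith [Nat.cast_nonneg (α := ℝ) n]
  have h1 := (GaussAux.ratio_tendsto a b c hre).mul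
    ((GaussAux.lim_one a b c hre).comp (tendsto_add_atTop_nat 1))
  have h2 : Tendsto (fun _ : ℕ => ∑' k, GaussAux.t a b c k) atTop
      (𝓝 (Complex.Gamma c * Complex.Gamma (c - a - b) /
        (Complex.Gamma (c - a) * Complex.Gamma (c - b)) * 1)) := by
    refine h1.congr (fun n => ?_)
    have h3 := GaussAux.iter a b c hc hre (n + 1)
    have h4 := GaussAux.P_ne hc (n + 1)
    have h5 := GaussAux.P_ne hd (n + 1)
    simp only [Function.comp]
    rw [div_mul_eq_mul_div, div_eq_iff (mul_ne_zero h4 h5), ← h3]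
    ring
  rw [mul_one] at h2
  rw [tendsto_nhds_unique tendsto_const_nhds h2] at hs
  exact hs
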